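/- arXiv:2411.19293 — 4 statements merged into one kernel-verified Lean document; each statement's English description precedes it below -/
import Mathlib

section
/- For all n×n real matrices A and B, the Frobenius norm of the commutator satisfies ‖AB − BA‖_F² ≤ n·(‖A‖_F²·‖B‖_F² − ⟨A,B⟩_F²). -/
open Matrix

/-- Frobenius inner product of two `n × n` real matrices: `⟨A, B⟩_F = tr(Aᵀ B)`. -/
noncomputable def frobIP {n : ℕ} (A B : Matrix (Fin n) (Fin n) ℝ) : ℝ := (Aᵀ * B).trace

/-- Frobenius norm of an `n × n` real matrix. -/
noncomputable def frobNorm {n : ℕ} (A : Matrix (Fin n) (Fin n) ℝ) : ℝ := Real.sqrt (frobIP A A)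

/-!
Let `D = Y Yᴴ + Yᴴ Y`, which is positive semidefinite of trace `2 ‖Y‖²`. Expanding the norms gives
`‖X Y - Y X‖² + ‖Xᴴ Y + Y Xᴴ‖² = re ⟪X, X D + D X⟫`, and Cauchy–Schwarz against `Y` bounds the
second term below by `‖⟪X, D⟫‖² / ‖Y‖²`. What remains is a bound on the variance of the observable
`X` in the state `D / tr D`. Diagonalizing `D`, it reduces to a variance bound for scalars weighted
by the eigenvalues. This yields the Böttcher–Wenzel inequality `‖X Y - Y X‖² ≤ 2 ‖X‖² ‖Y‖²` (the
argument is due to Audenaert), and replacing `Y` by its component orthogonal to `X`, which does not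
change the commutator, turns the right-hand side into a Gram determinant.
-/

open scoped InnerProductSpace ComplexOrder
open RCLike (re)

section InnerProductSpace

variable {𝕜 E : Type*} [RCLike 𝕜] [NormedAddCommGroup E]

theorem norm_inner_sq_le_norm_sq_mul_norm_sq [InnerProductSpace 𝕜 E] (x y : E) :
    ‖⟪x, y⟫_𝕜‖ ^ 2 ≤ ‖x‖ ^ 2 * ‖y‖ ^ 2 := by
  rw [← mul_pow]
  gcongr
  exact norm_inner_le_norm x y

theorem exists_norm_sq_mul_norm_sub_smul_sq_eq [InnerProductSpace 𝕜 E] (x y : E) :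
    ∃ c : 𝕜, ‖x‖ ^ 2 * ‖y - c • x‖ ^ 2 = ‖x‖ ^ 2 * ‖y‖ ^ 2 - ‖⟪x, y⟫_𝕜‖ ^ 2 := by
  rcases eq_or_ne x 0 with rfl | hx
  · exact ⟨0, by simp⟩
  have norm_ne_zero : (‖x‖ : 𝕜) ≠ 0 := by simpa using hx
  set c : 𝕜 := ⟪x, y⟫_𝕜 / (‖x‖ : 𝕜) ^ 2
  have inner_eq : c * (‖x‖ : 𝕜) ^ 2 = ⟪x, y⟫_𝕜 := div_mul_cancel₀ _ (pow_ne_zero 2 norm_ne_zero)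
  have orthogonal : ⟪y - c • x, c • x⟫_𝕜 = 0 := by
    rw [inner_smul_right, inner_sub_left, inner_smul_left, inner_self_eq_norm_sq_to_K,
      ← inner_conj_symm y x, ← inner_eq]
    simp
  have pythagoras : ‖y‖ ^ 2 = ‖y - c • x‖ ^ 2 + (‖c‖ * ‖x‖) ^ 2 := by
    simpa [sq, norm_smul] using norm_add_sq_eq_norm_sq_add_norm_sq_of_inner_eq_zero _ _ orthogonal
  refine ⟨c, ?_⟩
  rw [pythagoras, ← inner_eq, norm_mul, norm_pow, RCLike.norm_ofReal, abs_norm]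
  ring

variable [InnerProductSpace ℝ E] {ι : Type*} [Fintype ι]

theorem sum_sum_mul_norm_add_sq (d : ι → ℝ) (x : ι → E) :
    ∑ i, ∑ j, d i * d j * ‖x i + x j‖ ^ 2 =
      2 * ((∑ i, d i) * ∑ i, d i * ‖x i‖ ^ 2 + ‖∑ i, d i • x i‖ ^ 2) := by
  have norm_sum : ‖∑ i, d i • x i‖ ^ 2 = ∑ i, ∑ j, d i * d j * ⟪x i, x j⟫_ℝ := by
    rw [← real_inner_self_eq_norm_sq, sum_inner]
    simp only [inner_sum, real_inner_smul_left, real_inner_smul_right]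
    exact Finset.sum_congr rfl fun i _ => Finset.sum_congr rfl fun j _ => by ring
  have right : (∑ i, d i) * ∑ i, d i * ‖x i‖ ^ 2 = ∑ i, ∑ j, d i * d j * ‖x j‖ ^ 2 := by
    simp only [Finset.sum_mul_sum, mul_assoc]
  have left : (∑ i, d i) * ∑ i, d i * ‖x i‖ ^ 2 = ∑ i, ∑ j, d i * d j * ‖x i‖ ^ 2 := by
    rw [right, Finset.sum_comm]
    simp only [mul_comm (d _) (d _)]
  calc ∑ i, ∑ j, d i * d j * ‖x i + x j‖ ^ 2
      = ∑ i, ∑ j, d i * d j * ‖x i‖ ^ 2 + ∑ i, ∑ j, d i * d j * ‖x j‖ ^ 2 +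
          2 * ∑ i, ∑ j, d i * d j * ⟪x i, x j⟫_ℝ := by
        simp only [Finset.mul_sum, ← Finset.sum_add_distrib, norm_add_sq_real]
        exact Finset.sum_congr rfl fun i _ => Finset.sum_congr rfl fun j _ => by ring
    _ = _ := by rw [← left, ← right, ← norm_sum]; ring

theorem two_mul_sum_sq_mul_norm_sq_le {d : ι → ℝ} (hd : ∀ i, 0 ≤ d i) (x : ι → E) :
    2 * ∑ i, d i ^ 2 * ‖x i‖ ^ 2 ≤
      (∑ i, d i) * ∑ i, d i * ‖x i‖ ^ 2 + ‖∑ i, d i • x i‖ ^ 2 := by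
  have diagonal_le : ∑ i, d i * d i * ‖x i + x i‖ ^ 2 ≤ ∑ i, ∑ j, d i * d j * ‖x i + x j‖ ^ 2 :=
    Finset.sum_le_sum fun i _ => Finset.single_le_sum
      (f := fun j => d i * d j * ‖x i + x j‖ ^ 2)
      (fun j _ => mul_nonneg (mul_nonneg (hd i) (hd j)) (sq_nonneg _)) (Finset.mem_univ i)
  have diagonal_eq : ∑ i, d i * d i * ‖x i + x i‖ ^ 2 = 4 * ∑ i, d i ^ 2 * ‖x i‖ ^ 2 := by
    rw [Finset.mul_sum]
    refine Finset.sum_congr rfl fun i _ => ?_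
    rw [← two_smul ℝ (x i), norm_smul, Real.norm_two]
    ring
  rw [diagonal_eq, sum_sum_mul_norm_add_sq] at diagonal_le
  linarith

theorem weighted_variance_le {d : ι → ℝ} (hd : ∀ i, 0 ≤ d i) (x : ι → E) :
    (∑ i, d i) * ∑ i, d i * ‖x i‖ ^ 2 - ‖∑ i, d i • x i‖ ^ 2 ≤
      (∑ i, d i) ^ 2 / 2 * ∑ i, ‖x i‖ ^ 2 := by
  have amgm (i : ι) : 2 * ((∑ k, d k) * (d i * ‖x i‖ ^ 2)) - 2 * (d i ^ 2 * ‖x i‖ ^ 2) ≤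
      (∑ k, d k) ^ 2 / 2 * ‖x i‖ ^ 2 := by
    nlinarith [mul_nonneg (sq_nonneg ((∑ k, d k) - 2 * d i)) (sq_nonneg ‖x i‖)]
  have sum_amgm := Finset.sum_le_sum fun i (_ : i ∈ Finset.univ) => amgm i
  simp only [Finset.sum_sub_distrib, ← Finset.mul_sum] at sum_amgm
  linarith [two_mul_sum_sq_mul_norm_sq_le hd x]

end InnerProductSpace

theorem sum_sum_add_mul_le {ι R : Type*} [Fintype ι] [CommRing R] [LinearOrder R]
    [IsStrictOrderedRing R] {d : ι → R} (hd : ∀ i, 0 ≤ d i) {a : ι → ι → R}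
    (ha : ∀ i j, 0 ≤ a i j) :
    ∑ i, ∑ j, (d i + d j) * a i j ≤
      (∑ i, d i) * ∑ i, ∑ j, a i j + (2 * ∑ i, d i * a i i - (∑ i, d i) * ∑ i, a i i) := by
  classical
  have entry_le (i j : ι) : (d i + d j) * a i j ≤ (∑ k, d k) * a i j +
      if i = j then 2 * (d i * a i i) - (∑ k, d k) * a i i else 0 := by
    split_ifs with hij
    · subst hij
      linarith
    · have pair_le : d i + d j ≤ ∑ k, d k := by
        rw [← Finset.sum_pair hij]
        exact Finset.sum_le_univ_sum_of_nonneg hd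
      simpa using mul_le_mul_of_nonneg_right pair_le (ha i j)
  refine (Finset.sum_le_sum fun i _ => Finset.sum_le_sum fun j _ => entry_le i j).trans_eq ?_
  simp only [Finset.sum_add_distrib, Finset.sum_ite_eq, Finset.mem_univ, if_true,
    Finset.sum_sub_distrib, ← Finset.mul_sum]

section Matrix

variable {m n R : Type*} [Fintype m] [Fintype n]

theorem trace_conjTranspose_mul_eq_sum [NonUnitalNonAssocSemiring R] [Star R] (A B : Matrix m n R) :
    (Aᴴ * B).trace = ∑ i, ∑ j, star (A i j) * B i j := by
  simp only [trace, diag, mul_apply, conjTranspose_apply]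
  exact Finset.sum_comm

theorem matrix_mul_comm_of_subsingleton [Subsingleton n] [NonUnitalNonAssocCommSemiring R]
    (A B : Matrix n n R) : A * B = B * A := by
  ext i j
  obtain rfl := Subsingleton.elim i j
  simp only [mul_apply, Subsingleton.elim _ i, mul_comm]

theorem trace_conjStarAlgAut [CommRing R] [StarRing R] [DecidableEq n]
    (U : unitary (Matrix n n R)) (A : Matrix n n R) :
    (Unitary.conjStarAlgAut R _ U A).trace = A.trace := by
  rw [Unitary.conjStarAlgAut_apply, trace_mul_cycle, Unitary.coe_star_mul_self, Matrix.one_mul]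

end Matrix

attribute [local instance] Matrix.frobeniusNormedAddCommGroup Matrix.frobeniusNormedSpace

theorem frobenius_norm_sq_eq_sum {m n α : Type*} [Fintype m] [Fintype n]
    [NormedAddCommGroup α] (A : Matrix m n α) : ‖A‖ ^ 2 = ∑ i, ∑ j, ‖A i j‖ ^ 2 := by
  have sum_nonneg : 0 ≤ ∑ i, ∑ j, ‖A i j‖ ^ 2 := by positivity
  simp only [frobenius_norm_def, Real.rpow_two, ← Real.sqrt_eq_rpow, Real.sq_sqrt sum_nonneg]

/-- The Frobenius inner product `⟪A, B⟫ = tr (Aᴴ B)` on matrices, inducing Mathlib's Frobenius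
norm; it makes Cauchy–Schwarz and orthogonality available. It is a local instance because matrices
carry several norms. -/
noncomputable local instance frobeniusInnerProductSpace {𝕜 m n : Type*} [RCLike 𝕜]
    [Fintype m] [Fintype n] : InnerProductSpace 𝕜 (Matrix m n 𝕜) where
  inner A B := (Aᴴ * B).trace
  norm_sq_eq_re_inner A := by
    simp only [frobenius_norm_sq_eq_sum, trace_conjTranspose_mul_eq_sum, RCLike.star_def,
      RCLike.conj_mul, ← RCLike.ofReal_pow, map_sum, RCLike.ofReal_re]
  conj_inner_symm A B := by
    rw [starRingEnd_apply, ← trace_conjTranspose, conjTranspose_mul, conjTranspose_conjTranspose]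
  add_left A B C := by rw [conjTranspose_add, Matrix.add_mul, trace_add]
  smul_left A B c := by simp

section Frobenius

variable {𝕜 m n : Type*} [RCLike 𝕜] [Fintype m] [Fintype n]

theorem frobenius_inner_def (A B : Matrix m n 𝕜) : ⟪A, B⟫_𝕜 = (Aᴴ * B).trace := rfl

theorem frobenius_inner_eq_sum (A B : Matrix m n 𝕜) :
    ⟪A, B⟫_𝕜 = ∑ i, ∑ j, star (A i j) * B i j :=
  trace_conjTranspose_mul_eq_sum A B

theorem frobenius_inner_mul_left {l : Type*} [Fintype l] (A : Matrix l m 𝕜) (B : Matrix m n 𝕜)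
    (C : Matrix l n 𝕜) : ⟪A * B, C⟫_𝕜 = ⟪B, Aᴴ * C⟫_𝕜 := by
  rw [frobenius_inner_def, frobenius_inner_def, conjTranspose_mul, Matrix.mul_assoc]

theorem frobenius_inner_mul_right {l : Type*} [Fintype l] (A : Matrix l m 𝕜) (B : Matrix m n 𝕜)
    (C : Matrix l n 𝕜) : ⟪A * B, C⟫_𝕜 = ⟪A, C * Bᴴ⟫_𝕜 := by
  rw [frobenius_inner_def, frobenius_inner_def, conjTranspose_mul, Matrix.mul_assoc,
    trace_mul_comm, Matrix.mul_assoc]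

variable [DecidableEq n]

theorem frobenius_inner_conjStarAlgAut (U : unitary (Matrix n n 𝕜)) (A B : Matrix n n 𝕜) :
    ⟪Unitary.conjStarAlgAut 𝕜 _ U A, Unitary.conjStarAlgAut 𝕜 _ U B⟫_𝕜 = ⟪A, B⟫_𝕜 := by
  rw [frobenius_inner_def, frobenius_inner_def, ← star_eq_conjTranspose, ← star_eq_conjTranspose,
    ← map_star, ← map_mul, trace_conjStarAlgAut]

theorem frobenius_norm_conjStarAlgAut (U : unitary (Matrix n n 𝕜)) (A : Matrix n n 𝕜) :
    ‖Unitary.conjStarAlgAut 𝕜 _ U A‖ = ‖A‖ := by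
  rw [norm_eq_sqrt_re_inner (𝕜 := 𝕜), norm_eq_sqrt_re_inner (𝕜 := 𝕜),
    frobenius_inner_conjStarAlgAut]

end Frobenius

section Commutator

variable {𝕜 ι : Type*} [RCLike 𝕜] [Fintype ι]

theorem re_frobenius_inner_anticommutator_diagonal [DecidableEq ι] (X : Matrix ι ι 𝕜) (d : ι → ℝ) :
    re ⟪X, X * diagonal (fun i => (d i : 𝕜)) + diagonal (fun i => (d i : 𝕜)) * X⟫_𝕜 =
      ∑ i, ∑ j, (d i + d j) * ‖X i j‖ ^ 2 := by
  rw [frobenius_inner_eq_sum]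
  simp only [map_sum, Matrix.add_apply, mul_diagonal, diagonal_mul]
  refine Finset.sum_congr rfl fun i _ => Finset.sum_congr rfl fun j _ => ?_
  calc re (star (X i j) * (X i j * (d j : 𝕜) + (d i : 𝕜) * X i j))
      = re (((d i + d j : ℝ) : 𝕜) * (star (X i j) * X i j)) := by
        congr 1
        push_cast
        ring
    _ = (d i + d j) * ‖X i j‖ ^ 2 := by
        rw [RCLike.re_ofReal_mul, ← starRingEnd_apply, RCLike.conj_mul, ← RCLike.ofReal_pow,
          RCLike.ofReal_re]

theorem norm_frobenius_inner_diagonal [DecidableEq ι] (X : Matrix ι ι 𝕜) (d : ι → ℝ) :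
    ‖⟪X, diagonal (fun i => (d i : 𝕜))⟫_𝕜‖ = ‖∑ i, d i • X i i‖ := by
  rw [norm_inner_symm, frobenius_inner_eq_sum]
  simp [diagonal_apply, apply_ite, ite_mul, RCLike.real_smul_eq_coe_mul]

theorem frobenius_variance_diagonal_le [DecidableEq ι] (X : Matrix ι ι 𝕜) {d : ι → ℝ}
    (hd : ∀ i, 0 ≤ d i) :
    (∑ i, d i) *
        re ⟪X, X * diagonal (fun i => (d i : 𝕜)) + diagonal (fun i => (d i : 𝕜)) * X⟫_𝕜 -
      2 * ‖⟪X, diagonal (fun i => (d i : 𝕜))⟫_𝕜‖ ^ 2 ≤ (∑ i, d i) ^ 2 * ‖X‖ ^ 2 := by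
  rw [re_frobenius_inner_anticommutator_diagonal, norm_frobenius_inner_diagonal,
    frobenius_norm_sq_eq_sum]
  have sum_nonneg : 0 ≤ ∑ i, d i := Finset.sum_nonneg fun i _ => hd i
  have anticommutator_le := mul_le_mul_of_nonneg_left
    (sum_sum_add_mul_le hd fun i j => sq_nonneg ‖X i j‖) sum_nonneg
  linarith [weighted_variance_le hd fun i => X i i]

theorem frobenius_variance_le (X : Matrix ι ι 𝕜) {D : Matrix ι ι 𝕜} (hD : D.PosSemidef) :
    re D.trace * re ⟪X, X * D + D * X⟫_𝕜 - 2 * ‖⟪X, D⟫_𝕜‖ ^ 2 ≤ re D.trace ^ 2 * ‖X‖ ^ 2 := by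
  classical
  have spectral := hD.isHermitian.spectral_theorem
  set U := hD.isHermitian.eigenvectorUnitary
  set d := hD.isHermitian.eigenvalues
  obtain ⟨Z, rfl⟩ := EquivLike.surjective (Unitary.conjStarAlgAut 𝕜 _ U) X
  have trace_eq : re (diagonal fun i => (d i : 𝕜)).trace = ∑ i, d i := by
    simp [trace_diagonal]
  rw [spectral, ← map_mul (Unitary.conjStarAlgAut 𝕜 _ U), ← map_mul (Unitary.conjStarAlgAut 𝕜 _ U),
    ← map_add]
  simp only [frobenius_inner_conjStarAlgAut, frobenius_norm_conjStarAlgAut, trace_conjStarAlgAut,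
    Function.comp_def, trace_eq]
  exact frobenius_variance_diagonal_le Z hD.eigenvalues_nonneg

theorem frobenius_norm_commutator_sq_add_norm_sq (X Y : Matrix ι ι 𝕜) :
    ‖X * Y - Y * X‖ ^ 2 + ‖Xᴴ * Y + Y * Xᴴ‖ ^ 2 =
      re ⟪X, X * (Y * Yᴴ + Yᴴ * Y) + (Y * Yᴴ + Yᴴ * Y) * X⟫_𝕜 := by
  have cross : re ⟪Xᴴ * Y, Y * Xᴴ⟫_𝕜 = re ⟪X * Y, Y * X⟫_𝕜 := by
    rw [frobenius_inner_mul_left, conjTranspose_conjTranspose, ← Matrix.mul_assoc,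
      ← frobenius_inner_mul_right, inner_re_symm]
  have norm_mul_right (Z : Matrix ι ι 𝕜) : ‖X * Z‖ ^ 2 = re ⟪X, X * (Z * Zᴴ)⟫_𝕜 := by
    rw [← inner_self_eq_norm_sq (𝕜 := 𝕜), frobenius_inner_mul_right, Matrix.mul_assoc]
  have norm_mul_left (Z : Matrix ι ι 𝕜) : ‖Z * X‖ ^ 2 = re ⟪X, Zᴴ * Z * X⟫_𝕜 := by
    rw [← inner_self_eq_norm_sq (𝕜 := 𝕜), frobenius_inner_mul_left, Matrix.mul_assoc]
  have norm_adjoint_left : ‖Xᴴ * Y‖ = ‖Yᴴ * X‖ := by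
    rw [← frobenius_norm_conjTranspose, conjTranspose_mul, conjTranspose_conjTranspose]
  have norm_adjoint_right : ‖Y * Xᴴ‖ = ‖X * Yᴴ‖ := by
    rw [← frobenius_norm_conjTranspose, conjTranspose_mul, conjTranspose_conjTranspose]
  rw [norm_sub_sq (𝕜 := 𝕜), norm_add_sq (𝕜 := 𝕜), cross, norm_adjoint_left, norm_adjoint_right]
  simp only [norm_mul_right, norm_mul_left, conjTranspose_conjTranspose, Matrix.mul_add,
    Matrix.add_mul, inner_add_right, map_add]
  ring

theorem frobenius_inner_adjoint_anticommutator (X Y : Matrix ι ι 𝕜) :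
    ⟪Y, Xᴴ * Y + Y * Xᴴ⟫_𝕜 = ⟪X, Y * Yᴴ + Yᴴ * Y⟫_𝕜 := by
  rw [inner_add_right, inner_add_right, ← frobenius_inner_mul_left, ← frobenius_inner_mul_right,
    frobenius_inner_mul_right, frobenius_inner_mul_left]

theorem re_trace_mul_conjTranspose_add (Y : Matrix ι ι 𝕜) :
    re (Y * Yᴴ + Yᴴ * Y).trace = 2 * ‖Y‖ ^ 2 := by
  rw [trace_add, trace_mul_comm, ← frobenius_inner_def, map_add, inner_self_eq_norm_sq]
  ring

theorem frobenius_norm_commutator_sq_le (X Y : Matrix ι ι 𝕜) :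
    ‖X * Y - Y * X‖ ^ 2 ≤ 2 * (‖X‖ ^ 2 * ‖Y‖ ^ 2) := by
  rcases eq_or_ne Y 0 with rfl | hY
  · simp
  have variance := frobenius_variance_le X
    ((posSemidef_self_mul_conjTranspose Y).add (posSemidef_conjTranspose_mul_self Y))
  rw [re_trace_mul_conjTranspose_add, ← frobenius_norm_commutator_sq_add_norm_sq,
    ← frobenius_inner_adjoint_anticommutator] at variance
  have cauchy_schwarz := norm_inner_sq_le_norm_sq_mul_norm_sq (𝕜 := 𝕜) Y (Xᴴ * Y + Y * Xᴴ)
  have norm_sq_pos : 0 < ‖Y‖ ^ 2 := by positivity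
  refine le_of_mul_le_mul_left ?_ norm_sq_pos
  linarith

theorem frobenius_norm_commutator_sq_le_two_mul_gram (A B : Matrix ι ι 𝕜) :
    ‖A * B - B * A‖ ^ 2 ≤ 2 * (‖A‖ ^ 2 * ‖B‖ ^ 2 - ‖⟪A, B⟫_𝕜‖ ^ 2) := by
  obtain ⟨c, gram_eq⟩ := exists_norm_sq_mul_norm_sub_smul_sq_eq (𝕜 := 𝕜) A B
  have commutator_eq : A * (B - c • A) - (B - c • A) * A = A * B - B * A := by
    simp [Matrix.mul_sub, Matrix.sub_mul]
  rw [← gram_eq, ← commutator_eq]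
  exact frobenius_norm_commutator_sq_le A (B - c • A)

theorem commutator_frobNorm_sq_le_general (A B : Matrix ι ι 𝕜) :
    ‖A * B - B * A‖ ^ 2 ≤
      min 2 (Fintype.card ι : ℝ) * (‖A‖ ^ 2 * ‖B‖ ^ 2 - ‖⟪A, B⟫_𝕜‖ ^ 2) := by
  rcases le_or_gt 2 (Fintype.card ι) with two_le_card | card_lt_two
  · rw [min_eq_left (by exact_mod_cast two_le_card)]
    exact frobenius_norm_commutator_sq_le_two_mul_gram A B
  · have : Subsingleton ι := Fintype.card_le_one_iff_subsingleton.1 (by lia)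
    rw [matrix_mul_comm_of_subsingleton A B, sub_self, norm_zero, zero_pow two_ne_zero]
    exact mul_nonneg (by positivity) (sub_nonneg.2 (norm_inner_sq_le_norm_sq_mul_norm_sq A B))

end Commutator

theorem frobIP_eq_inner {n : ℕ} (A B : Matrix (Fin n) (Fin n) ℝ) : frobIP A B = ⟪A, B⟫_ℝ := by
  rw [frobIP, frobenius_inner_def, conjTranspose_eq_transpose_of_trivial]

theorem frobNorm_eq_norm {n : ℕ} (A : Matrix (Fin n) (Fin n) ℝ) : frobNorm A = ‖A‖ := by
  rw [frobNorm, frobIP_eq_inner, norm_eq_sqrt_real_inner]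

/-- For all `n × n` real matrices `A`, `B`, the Frobenius norm of the commutator satisfies
`‖AB − BA‖_F² ≤ n · (‖A‖_F² · ‖B‖_F² − ⟨A,B⟩_F²)`. -/
theorem commutator_frobNorm_sq_le (n : ℕ) (A B : Matrix (Fin n) (Fin n) ℝ) :
    frobNorm (A * B - B * A) ^ 2 ≤ (n : ℝ) * (frobNorm A ^ 2 * frobNorm B ^ 2 - frobIP A B ^ 2) := by
  have gram_nonneg := sub_nonneg.2 (norm_inner_sq_le_norm_sq_mul_norm_sq (𝕜 := ℝ) A B)
  simpa only [frobNorm_eq_norm, frobIP_eq_inner, Real.norm_eq_abs, sq_abs, Fintype.card_fin] using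
    (commutator_frobNorm_sq_le_general A B).trans
      (mul_le_mul_of_nonneg_right (min_le_right _ _) gram_nonneg)
end

section
/- For any finite families (u_j)_{j∈J} and (v_j)_{j∈J} of n×n real matrices indexed by the same finite set J, one has (Σ_{j∈J} ‖u_j‖_F²)·(Σ_{j∈J} ‖v_j‖_F²) − (Σ_{j∈J} ⟨u_j, v_j⟩_F)² ≥ (1/n)·Σ_{j∈J} ‖[v_j, u_j]‖_F². -/
open Matrix

/-!
For a skew-symmetric matrix `K`, the form `x ⬝ᵥ K *ᵥ y` is, up to a factor `2`, the Frobenius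
pairing of `K` with `x yᵀ - y xᵀ`, whose squared norm is `2 (|x|² |y|² - ⟨x, y⟩²)`. Cauchy–Schwarz
thus bounds the form by the Gram determinant of `x` and `y`, and not merely by `|x|² |y|²`.

For a fixed `C`, the form `(A, B) ↦ ⟨C, [B, A]⟩` is of this kind: written with Kronecker products,
its matrix has squared norm `2 (n ‖C‖² - (tr C)²)`. A family of forms is a single form with a block
diagonal matrix, so the bound holds for families. Choosing `C j = [v j, u j]`, which has trace `0`,
turns it into `S² ≤ n S G` with `S = ∑ j, ‖[v j, u j]‖²` and `G` the Gram determinant of `u`, `v`.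
-/

open scoped Kronecker

section Gram

variable {ι κ J R : Type*} [Fintype ι] [Fintype J]

theorem dotProduct_blockDiagonal_mulVec [NonUnitalNonAssocSemiring R] [Fintype κ]
    [DecidableEq J] (K : J → Matrix ι κ R) (x : J → ι → R) (y : J → κ → R) :
    (fun p : ι × J ↦ x p.2 p.1) ⬝ᵥ blockDiagonal K *ᵥ (fun p ↦ y p.2 p.1)
      = ∑ j, x j ⬝ᵥ K j *ᵥ y j := by
  simp [dotProduct, mulVec, blockDiagonal_apply, Fintype.sum_prod_type_right, ite_mul]

variable [CommRing R]

theorem trace_transpose_mul_self_vecMulVec_sub (x y : ι → R) :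
    ((vecMulVec x y - vecMulVec y x)ᵀ * (vecMulVec x y - vecMulVec y x)).trace
      = 2 * ((x ⬝ᵥ x) * (y ⬝ᵥ y) - (x ⬝ᵥ y) ^ 2) := by
  simp only [transpose_sub, transpose_vecMulVec, sub_mul, mul_sub, vecMulVec_mul_vecMulVec,
    trace_sub, trace_vecMulVec, dotProduct_smul, smul_eq_mul, dotProduct_comm y x]
  ring

theorem trace_transpose_mul_vecMulVec_sub {K : Matrix ι ι R} (hK : Kᵀ = -K) (x y : ι → R) :
    (Kᵀ * (vecMulVec x y - vecMulVec y x)).trace = 2 * (x ⬝ᵥ K *ᵥ y) := by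
  have hskew : x ⬝ᵥ K *ᵥ y = -(y ⬝ᵥ K *ᵥ x) := by
    rw [dotProduct_mulVec, ← mulVec_transpose, hK, neg_mulVec, neg_dotProduct, dotProduct_comm]
  rw [hK, mul_sub, trace_sub, neg_mul, neg_mul, mul_vecMulVec, mul_vecMulVec, trace_neg, trace_neg,
    trace_vecMulVec, trace_vecMulVec, dotProduct_comm (K *ᵥ x), dotProduct_comm (K *ᵥ y), hskew]
  ring

variable [LinearOrder R] [IsStrictOrderedRing R]

theorem dotProduct_sq_le (x y : ι → R) : (x ⬝ᵥ y) ^ 2 ≤ (x ⬝ᵥ x) * (y ⬝ᵥ y) := by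
  simpa only [dotProduct, sq] using Finset.sum_mul_sq_le_sq_mul_sq Finset.univ x y

theorem trace_transpose_mul_sq_le [Fintype κ] (A B : Matrix ι κ R) :
    (Aᵀ * B).trace ^ 2 ≤ (Aᵀ * A).trace * (Bᵀ * B).trace := by
  simpa only [vec_dotProduct_vec] using dotProduct_sq_le A.vec B.vec

theorem two_mul_dotProduct_mulVec_sq_le {K : Matrix ι ι R} (hK : Kᵀ = -K) (x y : ι → R) :
    2 * (x ⬝ᵥ K *ᵥ y) ^ 2
      ≤ (Kᵀ * K).trace * ((x ⬝ᵥ x) * (y ⬝ᵥ y) - (x ⬝ᵥ y) ^ 2) := by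
  have h := trace_transpose_mul_sq_le K (vecMulVec x y - vecMulVec y x)
  rw [trace_transpose_mul_vecMulVec_sub hK, trace_transpose_mul_self_vecMulVec_sub] at h
  linarith

theorem sum_dotProduct_sq_le (x y : J → ι → R) :
    (∑ j, x j ⬝ᵥ y j) ^ 2 ≤ (∑ j, x j ⬝ᵥ x j) * ∑ j, y j ⬝ᵥ y j := by
  simpa only [dotProduct, Fintype.sum_prod_type_right] using
    dotProduct_sq_le (fun p : ι × J ↦ x p.2 p.1) fun p ↦ y p.2 p.1

theorem sum_trace_transpose_mul_sq_le [Fintype κ] (A B : J → Matrix ι κ R) :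
    (∑ j, ((A j)ᵀ * B j).trace) ^ 2
      ≤ (∑ j, ((A j)ᵀ * A j).trace) * ∑ j, ((B j)ᵀ * B j).trace := by
  simpa only [vec_dotProduct_vec] using sum_dotProduct_sq_le (fun j ↦ (A j).vec) fun j ↦ (B j).vec

theorem two_mul_sum_dotProduct_mulVec_sq_le {K : J → Matrix ι ι R} (hK : ∀ j, (K j)ᵀ = -K j)
    (x y : J → ι → R) :
    2 * (∑ j, x j ⬝ᵥ K j *ᵥ y j) ^ 2
      ≤ (∑ j, ((K j)ᵀ * K j).trace)
        * ((∑ j, x j ⬝ᵥ x j) * (∑ j, y j ⬝ᵥ y j) - (∑ j, x j ⬝ᵥ y j) ^ 2) := by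
  classical
  have hK' : (blockDiagonal K)ᵀ = -blockDiagonal K := by
    rw [blockDiagonal_transpose, ← blockDiagonal_neg]
    exact congrArg blockDiagonal (funext hK)
  have h := two_mul_dotProduct_mulVec_sq_le hK' (fun p ↦ x p.2 p.1) fun p ↦ y p.2 p.1
  rw [dotProduct_blockDiagonal_mulVec, blockDiagonal_transpose, ← blockDiagonal_mul,
    trace_blockDiagonal] at h
  simpa only [dotProduct, Fintype.sum_prod_type_right] using h

end Gram

section Commutator

variable {ι J R : Type*} [CommRing R]

section Form

variable [DecidableEq ι]

/-- In the coordinates `Matrix.vec`, the matrix of the alternating bilinear form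
`(A, B) ↦ ⟨C, [B, A]⟩_F`. It is the Kronecker matrix of `X ↦ X * C - C * X` precomposed with
transposition, which `Prod.swap` implements. -/
def commutatorForm (C : Matrix ι ι R) : Matrix (ι × ι) (ι × ι) R :=
  (Cᵀ ⊗ₖ 1 - 1 ⊗ₖ C).submatrix id Prod.swap

theorem commutatorForm_transpose (C : Matrix ι ι R) :
    (commutatorForm C)ᵀ = -commutatorForm C := by
  ext ⟨j, i⟩ ⟨l, k⟩
  simp [commutatorForm, one_apply, eq_comm]

variable [Fintype ι]

theorem commutatorForm_mulVec_vec (C B : Matrix ι ι R) :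
    commutatorForm C *ᵥ B.vec = (Bᵀ * C - C * Bᵀ).vec := by
  have h := submatrix_mulVec_equiv (Cᵀ ⊗ₖ 1 - 1 ⊗ₖ C) B.vec id (Equiv.prodComm ι ι)
  simpa [commutatorForm, ← vec_transpose, sub_mulVec, kronecker_mulVec_vec] using h

theorem vec_dotProduct_commutatorForm_mulVec_vec (A B C : Matrix ι ι R) :
    A.vec ⬝ᵥ commutatorForm C *ᵥ B.vec = ((B * A - A * B)ᵀ * C).trace := by
  rw [commutatorForm_mulVec_vec, vec_dotProduct_vec, mul_sub, ← mul_assoc, ← mul_assoc,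
    trace_sub, trace_mul_cycle Aᵀ C, transpose_sub, transpose_mul, transpose_mul, sub_mul,
    trace_sub]

theorem trace_transpose_mul_self_commutatorForm (C : Matrix ι ι R) :
    ((commutatorForm C)ᵀ * commutatorForm C).trace
      = 2 * (Fintype.card ι * (Cᵀ * C).trace - C.trace ^ 2) := by
  have hswap : ((commutatorForm C)ᵀ * commutatorForm C).trace
      = ((C ⊗ₖ 1 - 1 ⊗ₖ Cᵀ) * (Cᵀ ⊗ₖ 1 - 1 ⊗ₖ C)).trace := by
    simp only [commutatorForm, transpose_submatrix, transpose_sub, ← kroneckerMap_transpose,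
      transpose_transpose, transpose_one]
    rw [← submatrix_mul _ _ _ _ _ Function.bijective_id]
    exact (Equiv.prodComm ι ι).sum_comp
      (diag ((C ⊗ₖ 1 - 1 ⊗ₖ Cᵀ) * (Cᵀ ⊗ₖ 1 - 1 ⊗ₖ C)))
  rw [hswap]
  simp only [sub_mul, mul_sub, ← mul_kronecker_mul, trace_sub, trace_kronecker, trace_one, one_mul,
    mul_one, trace_transpose, trace_mul_comm C Cᵀ]
  ring

end Form

variable [Fintype ι] [Fintype J] [LinearOrder R] [IsStrictOrderedRing R]

theorem sum_trace_transpose_commutator_mul_sq_le (u v C : J → Matrix ι ι R) :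
    (∑ j, ((v j * u j - u j * v j)ᵀ * C j).trace) ^ 2
      ≤ (∑ j, (Fintype.card ι * ((C j)ᵀ * C j).trace - (C j).trace ^ 2))
        * ((∑ j, ((u j)ᵀ * u j).trace) * (∑ j, ((v j)ᵀ * v j).trace)
          - (∑ j, ((u j)ᵀ * v j).trace) ^ 2) := by
  classical
  have h := two_mul_sum_dotProduct_mulVec_sq_le (fun j ↦ commutatorForm_transpose (C j))
    (fun j ↦ (u j).vec) fun j ↦ (v j).vec
  simp only [vec_dotProduct_commutatorForm_mulVec_vec, trace_transpose_mul_self_commutatorForm,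
    vec_dotProduct_vec, ← Finset.mul_sum, mul_assoc] at h
  exact le_of_mul_le_mul_left h two_pos

theorem sum_frobNorm_sq_mul_sub_sq_ge_general (u v : J → Matrix ι ι R) :
    ∑ j, ((v j * u j - u j * v j)ᵀ * (v j * u j - u j * v j)).trace
      ≤ Fintype.card ι * ((∑ j, ((u j)ᵀ * u j).trace) * (∑ j, ((v j)ᵀ * v j).trace)
        - (∑ j, ((u j)ᵀ * v j).trace) ^ 2) := by
  have trace_commutator (j : J) : (v j * u j - u j * v j).trace = 0 := by
    rw [trace_sub, trace_mul_comm, sub_self]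
  have h := sum_trace_transpose_commutator_mul_sq_le u v fun j ↦ v j * u j - u j * v j
  simp only [trace_commutator, zero_pow two_ne_zero, sub_zero, ← Finset.mul_sum] at h
  rw [sq, mul_right_comm] at h
  rcases le_or_gt (∑ j, ((v j * u j - u j * v j)ᵀ * (v j * u j - u j * v j)).trace) 0 with hS | hS
  · exact hS.trans
      (mul_nonneg (Nat.cast_nonneg _) (sub_nonneg.2 (sum_trace_transpose_mul_sq_le u v)))
  · exact le_of_mul_le_mul_right h hS

end Commutator

theorem frobNorm_sq {n : ℕ} (A : Matrix (Fin n) (Fin n) ℝ) : frobNorm A ^ 2 = frobIP A A := by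
  refine Real.sq_sqrt ?_
  rw [frobIP, ← vec_dotProduct_vec]
  exact Finset.sum_nonneg fun p _ ↦ mul_self_nonneg (A.vec p)

/-- For finite families `(u_j)` and `(v_j)` of `n × n` real matrices indexed by a finite set `J`,
`(Σ_j ‖u_j‖_F²)·(Σ_j ‖v_j‖_F²) − (Σ_j ⟨u_j, v_j⟩_F)² ≥ (1/n)·Σ_j ‖[v_j, u_j]‖_F²`,
where `[A, B] = AB − BA`. -/
theorem sum_frobNorm_sq_mul_sub_sq_ge (n : ℕ) (J : Type*) [Fintype J]
    (u v : J → Matrix (Fin n) (Fin n) ℝ) :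
    (∑ j, frobNorm (u j) ^ 2) * (∑ j, frobNorm (v j) ^ 2) - (∑ j, frobIP (u j) (v j)) ^ 2
      ≥ (n : ℝ)⁻¹ * ∑ j, frobNorm (v j * u j - u j * v j) ^ 2 := by
  simpa only [frobNorm_sq, frobIP, Fintype.card_fin] using
    inv_mul_le_of_le_mul₀ (Nat.cast_nonneg _) (sub_nonneg.2 (sum_trace_transpose_mul_sq_le u v))
      (sum_frobNorm_sq_mul_sub_sq_ge_general u v)
end

section
/- Pointwise Kato inequality for the Frobenius norm: let u = (u_1,…,u_n): ℝⁿ → (n×n real matrices)ⁿ be twice continuously differentiable and let x ∈ ℝⁿ be a point where u(x) ≠ 0. Then the scalar function y ↦ ‖u(y)‖_F is twice differentiable near x and at x satisfies Δ‖u‖_F ≥ ⟨u, Δu⟩_F / ‖u‖_F + (1/n)·Σ_{i,j} ‖[∂_i u_j, u_j]‖_F² / ‖u‖_F³, where Δ acts componentwise on u and ⟨u, Δu⟩_F = Σ_j ⟨u_j, Δu_j⟩_F. -/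
open scoped BigOperators

noncomputable section

/-- Euclidean space `ℝⁿ`. -/
abbrev En (n : ℕ) := EuclideanSpace ℝ (Fin n)

/-- `n × n` real matrices, represented entrywise. -/
abbrev Mat (n : ℕ) := Fin n → Fin n → ℝ

variable {n : ℕ}

/-- Frobenius inner product `⟨A,B⟩_F = tr(AᵀB) = Σ_{μν} A_{μν} B_{μν}`. -/
def fipE (A B : Mat n) : ℝ := ∑ μ, ∑ ν, A μ ν * B μ ν

/-- Frobenius norm. -/
def fnormE (A : Mat n) : ℝ := Real.sqrt (fipE A A)

/-- Matrix commutator `[A, B] = AB − BA`, entrywise. -/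
def brkt (A B : Mat n) : Mat n := fun μ ν => ∑ k, (A μ k * B k ν - B μ k * A k ν)

/-- `A` is skew-symmetric. -/
def skewM (A : Mat n) : Prop := ∀ μ ν, A ν μ = -A μ ν

/-- Partial derivative `∂_i f` of a scalar function on `ℝⁿ`. -/
def pder (i : Fin n) (f : En n → ℝ) (y : En n) : ℝ :=
  fderiv ℝ f y (EuclideanSpace.single i 1)

/-- Euclidean Laplacian `Δf = Σ_i ∂_i ∂_i f` of a scalar function on `ℝⁿ`. -/
def lapS (f : En n → ℝ) (y : En n) : ℝ := ∑ i, pder i (fun z => pder i f z) y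

/-- Componentwise partial derivative `∂_i u` of a matrix-valued function on `ℝⁿ`. -/
def pderM (i : Fin n) (u : En n → Mat n) (y : En n) : Mat n :=
  fun μ ν => pder i (fun z => u z μ ν) y

/-- Componentwise Laplacian `Δu` of a matrix-valued function on `ℝⁿ`. -/
def lapM (u : En n → Mat n) (y : En n) : Mat n := fun μ ν => lapS (fun z => u z μ ν) y

/-- The constant `a = √(n−2)/(2√2)`. -/
def aC (n : ℕ) : ℝ := Real.sqrt ((n : ℝ) - 2) / (2 * Real.sqrt 2)

/-- The constant `b = (1/2)(6n − 12 − (n+2)√(2n−4))`. -/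
def bC (n : ℕ) : ℝ := (1 / 2) * (6 * (n : ℝ) - 12 - ((n : ℝ) + 2) * Real.sqrt (2 * (n : ℝ) - 4))

/-- `σ_i(y)`, the skew matrix with entries `(σ_i(y))^μ_ν = δ_{iν} y^μ − δ_{iμ} y^ν`. -/
def sigmaM (i : Fin n) (y : En n) : Mat n :=
  fun μ ν => (if i = ν then y μ else 0) - (if i = μ then y ν else 0)

/-- The soliton connection `W_i(y) = σ_i(y)/(a|y|² + b)`. -/
def Wc (i : Fin n) (y : En n) : Mat n :=
  fun μ ν => sigmaM i y μ ν / (aC n * ‖y‖ ^ 2 + bC n)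

/-- The curvature `F_{ij} = ∂_i W_j − ∂_j W_i + [W_i, W_j]` of the soliton connection `W`. -/
def Fc (i j : Fin n) (y : En n) : Mat n :=
  pderM i (Wc j) y - pderM j (Wc i) y + brkt (Wc i y) (Wc j y)

/-- The linearized operator `L` of the rescaled Yang–Mills de Turck flow at the soliton `W`:
`(Lu)_j = Δu_j − (1/2)Σ_i y_i ∂_i u_j − (1/2)u_j + 2Σ_i [W_i, ∂_i u_j]
  + Σ_i [W_i, [W_i, u_j]] + 2Σ_i [u_i, F_{ij}]`. -/
def Lop (u : En n → Fin n → Mat n) (y : En n) (j : Fin n) : Mat n :=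
  lapM (fun z => u z j) y
    - (1 / 2 : ℝ) • (∑ i, y i • pderM i (fun z => u z j) y)
    - (1 / 2 : ℝ) • u y j
    + (2 : ℝ) • ∑ i, brkt (Wc i y) (pderM i (fun z => u z j) y)
    + ∑ i, brkt (Wc i y) (brkt (Wc i y) (u y j))
    + (2 : ℝ) • ∑ i, brkt (u y i) (Fc i j y)

/-- Squared Frobenius norm of a tuple of matrices: `‖u‖_F² = Σ_j ‖u_j‖_F²`. -/
def tnormSq (v : Fin n → Mat n) : ℝ := ∑ j, fipE (v j) (v j)

/-- The Gaussian weight `ρ(y) = e^{−|y|²/4}`. -/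
def gauss (y : En n) : ℝ := Real.exp (-‖y‖ ^ 2 / 4)

end

/-! For a map `w` into a real inner product space, differentiating `‖w‖ ∂ᵢ‖w‖ = ⟪w, ∂ᵢw⟫` gives
`∂ᵢ∂ᵢ‖w‖ = ⟪w, ∂ᵢ∂ᵢw⟫ / ‖w‖ + (‖w‖² ‖∂ᵢw‖² - ⟪w, ∂ᵢw⟫²) / ‖w‖³`, so the excess over the naive value
is a Gram determinant. By Lagrange's identity that determinant is half the sum of the squares of all
2 × 2 minors `A p q * B r s - A r s * B p q`, and an entry of a commutator is a sum of only `n` such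
minors, namely those whose index pairs compose. Cauchy–Schwarz then bounds the commutator by `n`
times the Gram determinant; on the diagonal, where each minor occurs together with its negative,
antisymmetry supplies the missing factor `1 / 2`. -/

section Antisymmetric

variable {R ι : Type*} [CommRing R] [Fintype ι]

lemma sum_sum_sub_mul_sq (f g : ι → R) :
    ∑ a, ∑ b, (f a * g b - f b * g a) ^ 2 =
      2 * ((∑ a, f a ^ 2) * ∑ a, g a ^ 2 - (∑ a, f a * g a) ^ 2) := by
  have expand (a b : ι) : (f a * g b - f b * g a) ^ 2 =
      f a ^ 2 * g b ^ 2 + g a ^ 2 * f b ^ 2 - 2 * (f a * g a * (f b * g b)) := by ring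
  simp only [expand, Finset.sum_add_distrib, Finset.sum_sub_distrib, ← Finset.mul_sum,
    ← Finset.sum_mul]
  ring

lemma sum_sum_mul_sub_of_antisymm {w : ι → ι → R} (hw : ∀ a b, w b a = -w a b) (d : ι → R) :
    ∑ a, ∑ b, w a b * (d a - d b) = 2 * ∑ a, (∑ b, w a b) * d a := by
  have swap : ∑ a, ∑ b, w a b * d b = -∑ a, ∑ b, w a b * d a := by
    rw [Finset.sum_comm]
    simp only [← Finset.sum_neg_distrib, ← neg_mul, ← hw]
  simp only [mul_sub, Finset.sum_sub_distrib, swap, Finset.sum_mul]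
  ring

variable [LinearOrder R] [IsStrictOrderedRing R]

/- The orthogonal projection of `w` onto the matrices of the form `d a - d b` has
`d a = (∑ b, w a b) / card ι`; the bound says that the residual has nonnegative norm. -/
lemma two_mul_sum_sq_sum_le_of_antisymm {w : ι → ι → R} (hw : ∀ a b, w b a = -w a b) :
    2 * ∑ a, (∑ b, w a b) ^ 2 ≤ Fintype.card ι * ∑ a, ∑ b, w a b ^ 2 := by
  cases isEmpty_or_nonempty ι
  · simp
  set N : R := (Fintype.card ι : R)
  have hN : 0 < N := Nat.cast_pos.2 Fintype.card_pos
  set d : ι → R := fun a => ∑ b, w a b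
  have cross : ∑ a, ∑ b, w a b * (d a - d b) = 2 * ∑ a, d a ^ 2 := by
    simpa only [sq] using sum_sum_mul_sub_of_antisymm hw d
  have differences : ∑ a, ∑ b, (d a - d b) ^ 2 ≤ 2 * N * ∑ a, d a ^ 2 := by
    have := sum_sum_sub_mul_sq d 1
    simp only [Pi.one_apply, mul_one, one_pow, Finset.sum_const, Finset.card_univ,
      nsmul_eq_mul] at this
    nlinarith [sq_nonneg (∑ a, d a)]
  have residual : 0 ≤ ∑ a, ∑ b, (N * w a b - (d a - d b)) ^ 2 := by positivity
  have expand (a b : ι) : (N * w a b - (d a - d b)) ^ 2 =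
      N ^ 2 * w a b ^ 2 - 2 * N * (w a b * (d a - d b)) + (d a - d b) ^ 2 := by ring
  simp only [expand, Finset.sum_add_distrib, Finset.sum_sub_distrib, ← Finset.mul_sum, cross]
    at residual
  refine le_of_mul_le_mul_left ?_ hN
  linarith

/- Count the quadruples with `q = r` and those with `p = s`: by symmetry of `g` both families have
the same weight, and they overlap exactly in the quadruples `(p, k, k, p)`. -/
lemma two_mul_sum_composable_le {g : ι → ι → ι → ι → R}
    (hg : ∀ p q r s, 0 ≤ g p q r s) (hsymm : ∀ p q r s, g r s p q = g p q r s) :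
    2 * ∑ p, ∑ k, ∑ s, g p k k s ≤
      ∑ p, ∑ q, ∑ r, ∑ s, g p q r s + ∑ p, ∑ k, g p k k p := by
  classical
  have middle : ∑ p, ∑ q, ∑ r, ∑ s, (if q = r then g p q r s else 0) =
      ∑ p, ∑ k, ∑ s, g p k k s := by
    simp [Finset.sum_ite_irrel]
  have outer : ∑ p, ∑ q, ∑ r, ∑ s, (if p = s then g p q r s else 0) =
      ∑ p, ∑ k, ∑ s, g p k k s :=
    calc
      _ = ∑ k, ∑ s, ∑ p, g k s p k := by simp
      _ = ∑ k, ∑ s, ∑ p, g p k k s := by simp only [hsymm _ _ _ _]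
      _ = ∑ p, ∑ k, ∑ s, g p k k s := Finset.sum_comm_cycle
  have overlap : ∑ p, ∑ q, ∑ r, ∑ s, (if p = s then if q = r then g p q r s else 0 else 0) =
      ∑ p, ∑ k, g p k k p := by
    simp
  rw [two_mul, ← overlap]
  nth_rewrite 1 [← middle]
  rw [← outer]
  simp only [← Finset.sum_add_distrib]
  refine Finset.sum_le_sum fun p _ => Finset.sum_le_sum fun q _ =>
    Finset.sum_le_sum fun r _ => Finset.sum_le_sum fun s _ => ?_
  have := hg p q r s
  split_ifs <;> simp [this]

lemma two_mul_sum_sq_sum_composable_le {W : ι → ι → ι → ι → R}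
    (hW : ∀ p q r s, W r s p q = -W p q r s) :
    2 * ∑ p, ∑ s, (∑ k, W p k k s) ^ 2 ≤
      Fintype.card ι * ∑ p, ∑ q, ∑ r, ∑ s, W p q r s ^ 2 := by
  set N : R := (Fintype.card ι : R)
  have closed : 2 * ∑ p, (∑ k, W p k k p) ^ 2 ≤ N * ∑ p, ∑ k, W p k k p ^ 2 :=
    two_mul_sum_sq_sum_le_of_antisymm fun p k => hW p k k p
  have defect_nonneg (p s : ι) : 0 ≤ N * ∑ k, W p k k s ^ 2 - (∑ k, W p k k s) ^ 2 :=
    sub_nonneg.2 sq_sum_le_card_mul_sum_sq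
  have closed_le_all : ∑ p, (N * ∑ k, W p k k p ^ 2 - (∑ k, W p k k p) ^ 2) ≤
      ∑ p, ∑ s, (N * ∑ k, W p k k s ^ 2 - (∑ k, W p k k s) ^ 2) :=
    Finset.sum_le_sum fun p _ =>
      Finset.single_le_sum (fun s _ => defect_nonneg p s) (Finset.mem_univ p)
  have count := two_mul_sum_composable_le (g := fun p q r s => W p q r s ^ 2)
    (fun _ _ _ _ => sq_nonneg _) fun p q r s => by rw [hW, neg_sq]
  simp only [Finset.sum_comm (γ := ι) (f := fun k s => W _ k k s ^ 2)] at count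
  have := mul_le_mul_of_nonneg_left count (Nat.cast_nonneg (Fintype.card ι) : 0 ≤ N)
  simp only [Finset.sum_sub_distrib, ← Finset.mul_sum] at closed_le_all
  linarith

open Matrix

lemma trace_transpose_lie_mul_lie_le (A B : Matrix ι ι R) :
    trace (⁅A, B⁆ᵀ * ⁅A, B⁆) ≤
      Fintype.card ι * (trace (Aᵀ * A) * trace (Bᵀ * B) - trace (Aᵀ * B) ^ 2) := by
  have frobenius (C D : Matrix ι ι R) : trace (Cᵀ * D) = ∑ a : ι × ι, C a.1 a.2 * D a.1 a.2 := by
    rw [Fintype.sum_prod_type, Finset.sum_comm]; rfl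
  have minors := sum_sum_sub_mul_sq (fun a : ι × ι => A a.1 a.2) (fun a => B a.1 a.2)
  have key := two_mul_sum_sq_sum_composable_le (W := fun p q r s => A p q * B r s - A r s * B p q)
    fun p q r s => by ring
  simp only [Fintype.sum_prod_type, frobenius, ← sq] at minors key ⊢
  rw [minors] at key
  have entry (p s : ι) : ⁅A, B⁆ p s = ∑ k, (A p k * B k s - A k s * B p k) := by
    simp [Ring.lie_def, mul_apply, mul_comm]
  simp only [entry]
  linarith

end Antisymmetric

open scoped RealInnerProductSpace Topology

section GramDet

variable {F : Type*} [NormedAddCommGroup F] [InnerProductSpace ℝ F]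

/-- The Gram determinant `‖x‖² ‖y‖² - ⟪x, y⟫²` of two vectors: the defect in the Cauchy–Schwarz
inequality, through which the derivative of `u` enters the Kato inequality. -/
def gramDet (x y : F) : ℝ := ‖x‖ ^ 2 * ‖y‖ ^ 2 - ⟪x, y⟫ ^ 2

lemma gramDet_comm (x y : F) : gramDet x y = gramDet y x := by
  rw [gramDet, gramDet, real_inner_comm, mul_comm]

lemma gramDet_nonneg (x y : F) : 0 ≤ gramDet x y := by
  rw [gramDet, sub_nonneg, ← mul_pow, ← sq_abs ⟪x, y⟫]
  gcongr
  exact abs_real_inner_le_norm x y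

lemma two_mul_inner_mul_inner_le (x y x' y' : F) :
    2 * (⟪x, y⟫ * ⟪x', y'⟫) ≤ ‖x‖ ^ 2 * ‖y'‖ ^ 2 + ‖x'‖ ^ 2 * ‖y‖ ^ 2 :=
  calc
    2 * (⟪x, y⟫ * ⟪x', y'⟫) ≤ 2 * ((‖x‖ * ‖y‖) * (‖x'‖ * ‖y'‖)) := by
      refine mul_le_mul_of_nonneg_left ?_ zero_le_two
      refine (le_abs_self _).trans ?_
      rw [abs_mul]
      gcongr <;> exact abs_real_inner_le_norm _ _
    _ = 2 * (‖x‖ * ‖y'‖) * (‖x'‖ * ‖y‖) := by ring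
    _ ≤ (‖x‖ * ‖y'‖) ^ 2 + (‖x'‖ * ‖y‖) ^ 2 := two_mul_le_add_sq _ _
    _ = ‖x‖ ^ 2 * ‖y'‖ ^ 2 + ‖x'‖ ^ 2 * ‖y‖ ^ 2 := by ring

lemma sum_gramDet_le_gramDet {ι : Type*} [Fintype ι] (x y : PiLp 2 fun _ : ι => F) :
    ∑ j, gramDet (x j) (y j) ≤ gramDet x y := by
  set T : ι → ι → ℝ := fun j k =>
    ‖x j‖ ^ 2 * ‖y k‖ ^ 2 + ‖x k‖ ^ 2 * ‖y j‖ ^ 2 - 2 * (⟪x j, y j⟫ * ⟪x k, y k⟫) with hT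
  have diagonal (j : ι) : T j j = 2 * gramDet (x j) (y j) := by
    simp only [hT, gramDet]
    ring
  have total : ∑ j, ∑ k, T j k = 2 * gramDet x y := by
    simp only [hT, gramDet, PiLp.norm_sq_eq_of_L2, PiLp.inner_apply, Finset.sum_add_distrib,
      Finset.sum_sub_distrib, ← Finset.mul_sum, ← Finset.sum_mul]
    ring
  have diagonal_le : ∑ j, T j j ≤ ∑ j, ∑ k, T j k :=
    Finset.sum_le_sum fun j _ => Finset.single_le_sum
      (fun k _ => sub_nonneg.2 (two_mul_inner_mul_inner_le (x j) (y j) (x k) (y k)))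
      (Finset.mem_univ j)
  simp only [diagonal, total, ← Finset.mul_sum] at diagonal_le
  linarith

end GramDet

section DirectionalDerivative

variable {E F G : Type*} [NormedAddCommGroup E] [NormedSpace ℝ E] [NormedAddCommGroup G]
  [NormedSpace ℝ G] {u : E → G} {x : E}

lemma exists_contDiffOn_ball_of_contDiffAt {k : ℕ} (hu : ContDiffAt ℝ k u x) :
    ∃ ε > 0, ContDiffOn ℝ k u (Metric.ball x ε) := by
  obtain ⟨s, hs, hus⟩ := hu.contDiffOn le_rfl (by simp)
  obtain ⟨ε, hε, hball⟩ := Metric.mem_nhds_iff.1 hs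
  exact ⟨ε, hε, hus.mono hball⟩

lemma eventually_differentiableAt_of_contDiffAt_two (hu : ContDiffAt ℝ 2 u x) :
    ∀ᶠ y in 𝓝 x, DifferentiableAt ℝ u y :=
  (hu.eventually (by simp)).mono fun _ hy => hy.differentiableAt two_ne_zero

lemma differentiableAt_fderiv_apply (hu : ContDiffAt ℝ 2 u x) (v : E) :
    DifferentiableAt ℝ (fun y => fderiv ℝ u y v) x :=
  ((hu.fderiv_right (m := 1) (by norm_num)).differentiableAt one_ne_zero).clm_apply
    (differentiableAt_const v)

section ContinuousLinearMap

variable [NormedAddCommGroup F] [NormedSpace ℝ F]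

lemma fderiv_clm_comp_apply (L : G →L[ℝ] F) (hu : DifferentiableAt ℝ u x) (v : E) :
    fderiv ℝ (fun y => L (u y)) x v = L (fderiv ℝ u x v) :=
  congr($((L.hasFDerivAt.comp x hu.hasFDerivAt).fderiv) v)

lemma fderiv_fderiv_clm_comp_apply (L : G →L[ℝ] F) (hu : ContDiffAt ℝ 2 u x) (v : E) :
    fderiv ℝ (fun y => fderiv ℝ (fun z => L (u z)) y v) x v =
      L (fderiv ℝ (fun y => fderiv ℝ u y v) x v) := by
  have first_order : (fun y => fderiv ℝ (fun z => L (u z)) y v) =ᶠ[𝓝 x]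
      fun y => L (fderiv ℝ u y v) :=
    (eventually_differentiableAt_of_contDiffAt_two hu).mono fun _ hy =>
      fderiv_clm_comp_apply L hy v
  rw [first_order.fderiv_eq, fderiv_clm_comp_apply L (differentiableAt_fderiv_apply hu v)]

end ContinuousLinearMap

variable [NormedAddCommGroup F] [InnerProductSpace ℝ F] {w : E → F}

lemma norm_mul_fderiv_norm_apply (hw : DifferentiableAt ℝ w x) (hx : w x ≠ 0) (v : E) :
    ‖w x‖ * fderiv ℝ (fun y => ‖w y‖) x v = ⟪w x, fderiv ℝ w x v⟫ := by
  have hnorm := hw.norm ℝ hx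
  have hsq : fderiv ℝ (fun y => ‖w y‖ * ‖w y‖) x v = fderiv ℝ (fun y => ⟪w y, w y⟫) x v := by
    simp only [real_inner_self_eq_norm_mul_norm]
  rw [fderiv_fun_mul hnorm hnorm, fderiv_inner_apply ℝ hw hw, real_inner_comm (w x)] at hsq
  simp only [add_apply, smul_apply, smul_eq_mul] at hsq
  linarith

lemma fderiv_fderiv_norm_apply (hw : ContDiffAt ℝ 2 w x) (hx : w x ≠ 0) (v : E) :
    fderiv ℝ (fun y => fderiv ℝ (fun z => ‖w z‖) y v) x v =
      ⟪w x, fderiv ℝ (fun y => fderiv ℝ w y v) x v⟫ / ‖w x‖ +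
        gramDet (w x) (fderiv ℝ w x v) / ‖w x‖ ^ 3 := by
  have hnorm : ContDiffAt ℝ 2 (fun y => ‖w y‖) x := hw.norm ℝ hx
  have hwx : DifferentiableAt ℝ w x := hw.differentiableAt two_ne_zero
  have first_order : (fun y => ‖w y‖ * fderiv ℝ (fun z => ‖w z‖) y v) =ᶠ[𝓝 x]
      fun y => ⟪w y, fderiv ℝ w y v⟫ := by
    filter_upwards [eventually_differentiableAt_of_contDiffAt_two hw,
      hw.continuousAt.eventually_ne hx] with y hy hy0
      using norm_mul_fderiv_norm_apply hy hy0 v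
  have second_order := congr($(first_order.fderiv_eq (𝕜 := ℝ)) v)
  rw [fderiv_fun_mul (hnorm.differentiableAt two_ne_zero) (differentiableAt_fderiv_apply hnorm v),
    fderiv_inner_apply ℝ hwx (differentiableAt_fderiv_apply hw v),
    real_inner_self_eq_norm_sq] at second_order
  simp only [add_apply, smul_apply, smul_eq_mul] at second_order
  have hx0 : ‖w x‖ ≠ 0 := norm_ne_zero_iff.2 hx
  rw [gramDet, ← norm_mul_fderiv_norm_apply hwx hx v]
  field_simp
  linear_combination second_order

lemma lapS_norm {d : ℕ} {w : En d → F} {x : En d} (hw : ContDiffAt ℝ 2 w x) (hx : w x ≠ 0) :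
    lapS (fun z => ‖w z‖) x =
      (∑ i, ⟪w x, fderiv ℝ (fun y => fderiv ℝ w y (EuclideanSpace.single i 1)) x
        (EuclideanSpace.single i 1)⟫) / ‖w x‖ +
      (∑ i, gramDet (w x) (fderiv ℝ w x (EuclideanSpace.single i 1))) / ‖w x‖ ^ 3 := by
  simp only [lapS, pder, fderiv_fderiv_norm_apply hw hx, Finset.sum_add_distrib, Finset.sum_div]

end DirectionalDerivative

section Frobenius

open scoped Matrix

variable {ι : Type*} {m d : ℕ} {u : En d → ι → Mat m} {x : En d}

/-- A matrix as a vector of the Euclidean space of its entries, whose inner product is the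
Frobenius inner product. -/
def frobVec (A : Mat m) : EuclideanSpace ℝ (Fin m × Fin m) := WithLp.toLp 2 fun p => A p.1 p.2

/-- A tuple of matrices as an element of the Hilbert sum of the Frobenius spaces, so that
`‖frobTuple v‖` is the Frobenius norm of `v` (the norm of `ι → Mat m` itself is a supremum). -/
def frobTuple : (ι → Mat m) →L[ℝ] PiLp 2 fun _ : ι => EuclideanSpace ℝ (Fin m × Fin m) where
  toFun v := WithLp.toLp 2 fun j => frobVec (v j)
  map_add' _ _ := rfl
  map_smul' _ _ := rfl
  cont := by
    unfold frobVec
    fun_prop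

lemma frobTuple_injective : Function.Injective (frobTuple : (ι → Mat m) →L[ℝ] _) := by
  intro v w h
  ext j p q
  exact congr($h j (p, q))

/-- The continuous linear functional reading off the entry `(μ, ν)` of the `j`-th matrix of a
tuple. -/
def entryCLM (j : ι) (μ ν : Fin m) : (ι → Mat m) →L[ℝ] ℝ :=
  (ContinuousLinearMap.proj (R := ℝ) (φ := fun _ : Fin m => ℝ) ν).comp <|
    (ContinuousLinearMap.proj (R := ℝ) (φ := fun _ : Fin m => Fin m → ℝ) μ).comp <|
      ContinuousLinearMap.proj (R := ℝ) (φ := fun _ : ι => Mat m) j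

lemma pder_entry [Finite ι] (hu : DifferentiableAt ℝ u x) (i : Fin d) (j : ι) (μ ν : Fin m) :
    pder i (fun z => u z j μ ν) x = fderiv ℝ u x (EuclideanSpace.single i 1) j μ ν :=
  have := Fintype.ofFinite ι
  fderiv_clm_comp_apply (entryCLM j μ ν) hu _

lemma inner_frobVec (A B : Mat m) : ⟪frobVec A, frobVec B⟫ = fipE A B := by
  simp [frobVec, fipE, PiLp.inner_apply, Fintype.sum_prod_type, mul_comm]

variable [Fintype ι]

lemma inner_frobTuple (v w : ι → Mat m) :
    ⟪frobTuple v, frobTuple w⟫ = ∑ j, fipE (v j) (w j) :=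
  (PiLp.inner_apply ..).trans <| Finset.sum_congr rfl fun j _ => inner_frobVec (v j) (w j)

lemma norm_frobTuple (v : ι → Mat m) : ‖frobTuple v‖ = √(∑ j, fipE (v j) (v j)) := by
  rw [norm_eq_sqrt_real_inner, inner_frobTuple]

lemma fipE_eq_trace (A B : Mat m) :
    fipE A B = Matrix.trace ((Matrix.of A)ᵀ * Matrix.of B) :=
  Finset.sum_comm

lemma of_brkt (A B : Mat m) : Matrix.of (brkt A B) = ⁅Matrix.of A, Matrix.of B⁆ := by
  ext p q
  simp [brkt, Ring.lie_def, Matrix.mul_apply]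

lemma fipE_brkt_le_gramDet (A B : Mat m) :
    fipE (brkt A B) (brkt A B) ≤ m * gramDet (frobVec A) (frobVec B) := by
  simpa only [gramDet, ← real_inner_self_eq_norm_sq, inner_frobVec, fipE_eq_trace, of_brkt,
    Fintype.card_fin] using trace_transpose_lie_mul_lie_le (Matrix.of A) (Matrix.of B)

lemma sum_fipE_brkt_le_gramDet (v w : ι → Mat m) :
    ∑ j, fipE (brkt (v j) (w j)) (brkt (v j) (w j)) ≤ m * gramDet (frobTuple v) (frobTuple w) :=
  calc
    _ ≤ ∑ j, m * gramDet (frobVec (v j)) (frobVec (w j)) :=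
      Finset.sum_le_sum fun j _ => fipE_brkt_le_gramDet (v j) (w j)
    _ = m * ∑ j, gramDet (frobTuple v j) (frobTuple w j) := (Finset.mul_sum ..).symm
    _ ≤ m * gramDet (frobTuple v) (frobTuple w) := by
      gcongr
      exact sum_gramDet_le_gramDet _ _

lemma lapS_entry (hu : ContDiffAt ℝ 2 u x) (j : ι) (μ ν : Fin m) :
    lapS (fun z => u z j μ ν) x =
      ∑ i, fderiv ℝ (fun y => fderiv ℝ u y (EuclideanSpace.single i 1)) x
        (EuclideanSpace.single i 1) j μ ν :=
  Finset.sum_congr rfl fun _ _ => fderiv_fderiv_clm_comp_apply (entryCLM j μ ν) hu _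

lemma lapS_norm_frobTuple (hu : ContDiffAt ℝ 2 u x) (hx : u x ≠ 0) :
    lapS (fun z => ‖frobTuple (u z)‖) x =
      (∑ j, fipE (u x j) fun μ ν => lapS (fun z => u z j μ ν) x) / ‖frobTuple (u x)‖ +
      (∑ i, gramDet (frobTuple (u x))
        (frobTuple fun j μ ν => pder i (fun z => u z j μ ν) x)) / ‖frobTuple (u x)‖ ^ 3 := by
  have hux : DifferentiableAt ℝ u x := hu.differentiableAt two_ne_zero
  have hw : ContDiffAt ℝ 2 (fun z => frobTuple (u z)) x := by fun_prop
  have hlap : (fun j μ ν => lapS (fun z => u z j μ ν) x) =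
      ∑ i, fderiv ℝ (fun y => fderiv ℝ u y (EuclideanSpace.single i 1)) x
        (EuclideanSpace.single i 1) := by
    ext j μ ν
    simp only [lapS_entry hu, Finset.sum_apply]
  have hpder (i : Fin d) : (fun j μ ν => pder i (fun z => u z j μ ν) x) =
      fderiv ℝ u x (EuclideanSpace.single i 1) := by
    ext j μ ν
    exact pder_entry hux i j μ ν
  rw [lapS_norm hw (map_ne_zero_iff _ frobTuple_injective |>.2 hx),
    ← inner_frobTuple (u x) fun j μ ν => lapS (fun z => u z j μ ν) x, hlap, map_sum, inner_sum]
  simp only [fderiv_fderiv_clm_comp_apply frobTuple hu, fderiv_clm_comp_apply frobTuple hux, hpder]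

end Frobenius

theorem pointwise_kato_inequality_general {ι : Type*} [Fintype ι] {d m : ℕ}
    {u : En d → ι → Mat m} {x : En d} (hu : ContDiffAt ℝ 2 u x) (hx : u x ≠ 0) :
    ContDiffAt ℝ 2 (fun z => √(∑ j, fipE (u z j) (u z j))) x ∧
    lapS (fun z => √(∑ j, fipE (u z j) (u z j))) x ≥
      (∑ j, fipE (u x j) fun μ ν => lapS (fun z => u z j μ ν) x) / √(∑ j, fipE (u x j) (u x j))
      + (m : ℝ)⁻¹ *
          (∑ i, ∑ j, fipE (brkt (fun μ ν => pder i (fun z => u z j μ ν) x) (u x j))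
            (brkt (fun μ ν => pder i (fun z => u z j μ ν) x) (u x j)))
          / √(∑ j, fipE (u x j) (u x j)) ^ 3 := by
  simp only [← norm_frobTuple]
  have hw : ContDiffAt ℝ 2 (fun z => frobTuple (u z)) x := by fun_prop
  refine ⟨hw.norm ℝ (map_ne_zero_iff _ frobTuple_injective |>.2 hx), ?_⟩
  rw [lapS_norm_frobTuple hu hx, ge_iff_le]
  gcongr
  refine inv_mul_le_of_le_mul₀ m.cast_nonneg (Finset.sum_nonneg fun _ _ => gramDet_nonneg _ _) ?_
  rw [Finset.mul_sum]
  gcongr with i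
  rw [gramDet_comm]
  exact sum_fipE_brkt_le_gramDet (fun j μ ν => pder i (fun z => u z j μ ν) x) (u x)

/-- Pointwise Kato inequality for the Frobenius norm: if `u : ℝⁿ → Matₙ(ℝ)ⁿ` is `C²` and
`u(x) ≠ 0`, then `y ↦ ‖u(y)‖_F` is twice continuously differentiable near `x` and at `x`
satisfies `Δ‖u‖_F ≥ ⟨u, Δu⟩_F/‖u‖_F + (1/n)·Σ_{i,j}‖[∂_i u_j, u_j]‖_F²/‖u‖_F³`. -/
theorem pointwise_kato_inequality (n : ℕ) (u : En n → Fin n → Mat n)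
    (hu : ContDiff ℝ 2 u) (x : En n) (hx : u x ≠ 0) :
    (∃ ε > 0, ContDiffOn ℝ 2 (fun z => Real.sqrt (tnormSq (u z))) (Metric.ball x ε)) ∧
    lapS (fun z => Real.sqrt (tnormSq (u z))) x ≥
      (∑ j, fipE (u x j) (lapM (fun z => u z j) x)) / Real.sqrt (tnormSq (u x))
      + (n : ℝ)⁻¹ *
          (∑ i, ∑ j, fipE (brkt (pderM i (fun z => u z j) x) (u x j))
            (brkt (pderM i (fun z => u z j) x) (u x j)))
          / Real.sqrt (tnormSq (u x)) ^ 3 := by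
  obtain ⟨hsmooth, hlap⟩ := pointwise_kato_inequality_general hu.contDiffAt hx
  exact ⟨exists_contDiffOn_ball_of_contDiffAt hsmooth, hlap⟩
end

section
/- There exists a constant C = C(n) such that the curvature of the Yang–Mills soliton connection W satisfies ‖F_{ij}(y)‖_F ≤ C/(1 + |y|²) for all y ∈ ℝⁿ and all indices i, j. -/
open scoped BigOperators

/-!
For a connection `A_i(y) = φ(s) σ_i(y)` with `s = |y|²`, the product rule and the commutator
`[σ_i, σ_j] = y_i σ_j − y_j σ_i − s σ_j(e_i)` give
`F_ij = (2φ − sφ²) σ_j(e_i) + (2φ' + φ²) (y_i σ_j − y_j σ_i)`,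
and the two matrices on the right have Frobenius norms `O(1)` and `O(s)`. The profile
`φ(s) = 1/(as + b)` with `a, b > 0` satisfies `sφ ≤ 1/a` and `φ' = −aφ²`, so both terms are `O(φ)`,
that is, `O(1/(1 + s))`. The soliton has such a profile because `b > 0` amounts to
`0 < 18(n − 2) − (n + 2)² = (n − 4)(10 − n)`.
-/

noncomputable section

variable {n : ℕ}

/-- The curvature `∂_i A_j − ∂_j A_i + [A_i, A_j]` of an arbitrary matrix-valued connection `A` on
`ℝⁿ`, of which `Fc` is the case `A = W`. -/
def curvature (A : Fin n → En n → Mat n) (i j : Fin n) (y : En n) : Mat n :=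
  pderM i (A j) y - pderM j (A i) y + brkt (A i y) (A j y)

/-- The rotationally equivariant connection `A_i(y) = φ(|y|²) σ_i(y)` with radial profile `φ`,
taken as a function of `|y|²` rather than `|y|` so that smoothness of `φ` carries over to `A`
at the origin. -/
def radialConn (φ : ℝ → ℝ) (i : Fin n) (y : En n) : Mat n := φ (‖y‖ ^ 2) • sigmaM i y

lemma Wc_eq_radialConn : (Wc : Fin n → En n → Mat n) = radialConn fun s ↦ (aC n * s + bC n)⁻¹ := by
  ext i y μ ν
  simp only [Wc, radialConn, Pi.smul_apply, smul_eq_mul, div_eq_inv_mul]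

lemma Fc_eq_curvature (i j : Fin n) (y : En n) :
    Fc i j y = curvature (radialConn fun s ↦ (aC n * s + bC n)⁻¹) i j y := by
  rw [← Wc_eq_radialConn]
  rfl

lemma isLinearMap_sigmaM_apply (i μ ν : Fin n) :
    IsLinearMap ℝ fun y : En n ↦ sigmaM i y μ ν where
  map_add x y := by simp only [sigmaM, PiLp.add_apply]; split_ifs <;> ring
  map_smul c y := by simp only [sigmaM, PiLp.smul_apply, smul_eq_mul]; split_ifs <;> ring

lemma hasFDerivAt_sigmaM_apply (i μ ν : Fin n) (y : En n) :
    HasFDerivAt (fun z : En n ↦ sigmaM i z μ ν)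
      ((isLinearMap_sigmaM_apply i μ ν).mk' _).toContinuousLinearMap y :=
  ((isLinearMap_sigmaM_apply i μ ν).mk' _).toContinuousLinearMap.hasFDerivAt

lemma pderM_sigmaM (i j : Fin n) (y : En n) :
    pderM i (sigmaM j) y = sigmaM j (EuclideanSpace.single i 1) := by
  ext μ ν
  simp [pderM, pder, (hasFDerivAt_sigmaM_apply j μ ν y).fderiv]

lemma hasFDerivAt_comp_norm_sq {E : Type*} [NormedAddCommGroup E] [InnerProductSpace ℝ E]
    {φ : ℝ → ℝ} {φ' : ℝ} {y : E} (hφ : HasDerivAt φ φ' (‖y‖ ^ 2)) :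
    HasFDerivAt (fun z : E ↦ φ (‖z‖ ^ 2)) (φ' • (2 • innerSL ℝ y)) y :=
  hφ.comp_hasFDerivAt y (hasStrictFDerivAt_norm_sq y).hasFDerivAt

lemma pder_comp_norm_sq {φ : ℝ → ℝ} {φ' : ℝ} {y : En n} (hφ : HasDerivAt φ φ' (‖y‖ ^ 2))
    (i : Fin n) : pder i (fun z ↦ φ (‖z‖ ^ 2)) y = 2 * φ' * y i := by
  simp only [pder, (hasFDerivAt_comp_norm_sq hφ).fderiv, smul_apply, coe_innerSL_apply,
    EuclideanSpace.inner_single_right, Real.ringHom_apply, one_mul,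
    nsmul_eq_mul, Nat.cast_ofNat, smul_eq_mul]
  ring

lemma pderM_smul {f : En n → ℝ} {A : En n → Mat n} {y : En n} (hf : DifferentiableAt ℝ f y)
    (hA : ∀ μ ν, DifferentiableAt ℝ (fun z ↦ A z μ ν) y) (i : Fin n) :
    pderM i (fun z ↦ f z • A z) y = f y • pderM i A y + pder i f y • A y := by
  ext μ ν
  simp [pderM, pder, fderiv_fun_mul hf (hA μ ν), mul_comm]

lemma pderM_radialConn {φ : ℝ → ℝ} {φ' : ℝ} {y : En n} (hφ : HasDerivAt φ φ' (‖y‖ ^ 2))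
    (i j : Fin n) :
    pderM i (radialConn φ j) y =
      φ (‖y‖ ^ 2) • sigmaM j (EuclideanSpace.single i 1) + (2 * φ' * y i) • sigmaM j y := by
  rw [← pderM_sigmaM i j y, ← pder_comp_norm_sq hφ i]
  exact pderM_smul (hasFDerivAt_comp_norm_sq hφ).differentiableAt
    (fun μ ν ↦ (hasFDerivAt_sigmaM_apply j μ ν y).differentiableAt) i

lemma brkt_smul_smul (c d : ℝ) (A B : Mat n) : brkt (c • A) (d • B) = (c * d) • brkt A B := by
  ext μ ν
  simp only [brkt, Pi.smul_apply, smul_eq_mul, Finset.mul_sum]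
  exact Finset.sum_congr rfl fun k _ ↦ by ring

lemma sigmaM_single_swap (i j : Fin n) :
    sigmaM i (EuclideanSpace.single j 1) = -sigmaM j (EuclideanSpace.single i 1) := by
  ext μ ν
  simp [sigmaM, ← ite_and, and_comm, @eq_comm _ μ, @eq_comm _ ν]

lemma brkt_sigmaM (i j : Fin n) (y : En n) :
    brkt (sigmaM i y) (sigmaM j y) =
      y i • sigmaM j y - y j • sigmaM i y - ‖y‖ ^ 2 • sigmaM j (EuclideanSpace.single i 1) := by
  ext μ ν
  simp only [brkt, sigmaM, mul_sub, mul_ite, sub_mul, ite_mul, zero_mul, ← pow_two, mul_zero,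
    Finset.sum_sub_distrib, Finset.sum_ite_irrel, Finset.sum_ite_eq, Finset.mem_univ, ↓reduceIte,
    ← EuclideanSpace.real_norm_sq_eq, Finset.sum_const_zero, @eq_comm _ j i, Pi.sub_apply,
    Pi.smul_apply, smul_eq_mul, PiLp.single_apply, @eq_comm _ μ i, @eq_comm _ ν i, mul_one]
  split_ifs <;> ring

theorem curvature_radialConn {φ : ℝ → ℝ} {φ' : ℝ} {y : En n} (hφ : HasDerivAt φ φ' (‖y‖ ^ 2))
    (i j : Fin n) :
    curvature (radialConn φ) i j y =
      (2 * φ (‖y‖ ^ 2) - ‖y‖ ^ 2 * φ (‖y‖ ^ 2) ^ 2) • sigmaM j (EuclideanSpace.single i 1)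
        + (2 * φ' + φ (‖y‖ ^ 2) ^ 2) • (y i • sigmaM j y - y j • sigmaM i y) := by
  simp only [curvature, pderM_radialConn hφ]
  rw [radialConn, radialConn, brkt_smul_smul, brkt_sigmaM, sigmaM_single_swap i j]
  module

section Frobenius

attribute [local instance] Matrix.frobeniusNormedAddCommGroup Matrix.frobeniusNormedSpace

lemma fnormE_eq_frobenius_norm (A : Mat n) : fnormE A = ‖Matrix.of A‖ := by
  simp [fnormE, fipE, Matrix.frobenius_norm_def, Real.sqrt_eq_rpow, pow_two]

lemma fnormE_add_le (A B : Mat n) : fnormE (A + B) ≤ fnormE A + fnormE B := by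
  simp only [fnormE_eq_frobenius_norm]
  exact norm_add_le (Matrix.of A) (Matrix.of B)

lemma fnormE_sub_le (A B : Mat n) : fnormE (A - B) ≤ fnormE A + fnormE B := by
  simp only [fnormE_eq_frobenius_norm]
  exact norm_sub_le (Matrix.of A) (Matrix.of B)

lemma fnormE_smul (c : ℝ) (A : Mat n) : fnormE (c • A) = |c| * fnormE A := by
  simp only [fnormE_eq_frobenius_norm]
  exact norm_smul c (Matrix.of A)

end Frobenius

lemma fipE_sigmaM_self (i : Fin n) (y : En n) :
    fipE (sigmaM i y) (sigmaM i y) = 2 * (‖y‖ ^ 2 - y i ^ 2) := by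
  rw [EuclideanSpace.real_norm_sq_eq]
  simp only [fipE, sigmaM, mul_sub, mul_ite, sub_mul, ite_mul, zero_mul, mul_zero,
    Finset.sum_sub_distrib, Finset.sum_ite_eq, Finset.mem_univ, ↓reduceIte, Finset.sum_ite_irrel,
    Finset.sum_const_zero, pow_two]
  ring

lemma fnormE_sigmaM_le (i : Fin n) (y : En n) : fnormE (sigmaM i y) ≤ √2 * ‖y‖ := by
  rw [fnormE, fipE_sigmaM_self]
  calc √(2 * (‖y‖ ^ 2 - y i ^ 2)) ≤ √(2 * ‖y‖ ^ 2) := by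
        gcongr
        exact sub_le_self _ (sq_nonneg _)
    _ = √2 * ‖y‖ := by rw [Real.sqrt_mul zero_le_two, Real.sqrt_sq (norm_nonneg y)]

lemma fnormE_sigmaM_alternating_le (i j : Fin n) (y : En n) :
    fnormE (y i • sigmaM j y - y j • sigmaM i y) ≤ 2 * √2 * ‖y‖ ^ 2 := by
  have hcoord (k l : Fin n) : fnormE (y k • sigmaM l y) ≤ ‖y‖ * (√2 * ‖y‖) := by
    rw [fnormE_smul]
    exact mul_le_mul (PiLp.norm_apply_le y k) (fnormE_sigmaM_le l y) (Real.sqrt_nonneg _)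
      (norm_nonneg y)
  linarith [fnormE_sub_le (y i • sigmaM j y) (y j • sigmaM i y), hcoord i j, hcoord j i]

theorem fnormE_curvature_radialConn_le {φ : ℝ → ℝ} {φ' : ℝ} {y : En n}
    (hφ : HasDerivAt φ φ' (‖y‖ ^ 2)) (i j : Fin n) :
    fnormE (curvature (radialConn φ) i j y) ≤
      √2 * |2 * φ (‖y‖ ^ 2) - ‖y‖ ^ 2 * φ (‖y‖ ^ 2) ^ 2|
        + 2 * √2 * ‖y‖ ^ 2 * |2 * φ' + φ (‖y‖ ^ 2) ^ 2| := by
  have hbasis : fnormE (sigmaM j (EuclideanSpace.single i (1 : ℝ))) ≤ √2 := by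
    simpa using fnormE_sigmaM_le j (EuclideanSpace.single i (1 : ℝ))
  rw [curvature_radialConn hφ]
  grw [fnormE_add_le, fnormE_smul, fnormE_smul, hbasis, fnormE_sigmaM_alternating_le]
  apply le_of_eq
  ring

lemma div_le_inv_of_mul_le {𝕜 : Type*} [Field 𝕜] [LinearOrder 𝕜] [IsStrictOrderedRing 𝕜]
    {a s D : 𝕜} (ha : 0 < a) (hD : 0 < D) (hsD : a * s ≤ D) : s / D ≤ a⁻¹ := by
  rwa [div_le_iff₀ hD, inv_mul_eq_div, le_div_iff₀' ha]

lemma abs_two_mul_inv_sub_le {a s D : ℝ} (ha : 0 < a) (hs : 0 ≤ s) (hD : 0 < D)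
    (hsD : a * s ≤ D) : |2 * D⁻¹ - s * D⁻¹ ^ 2| ≤ (2 + a⁻¹) / D := by
  have hratio : s / D ≤ a⁻¹ := div_le_inv_of_mul_le ha hD hsD
  calc |2 * D⁻¹ - s * D⁻¹ ^ 2| = |(2 - s / D) / D| := by
        congr 1
        field_simp
    _ = |2 - s / D| / D := by rw [abs_div, abs_of_pos hD]
    _ ≤ (2 + a⁻¹) / D := by
        gcongr
        rw [abs_le]
        constructor <;> linarith [div_nonneg hs hD.le]

lemma mul_abs_two_mul_neg_div_sq_add_le {a s D : ℝ} (ha : 0 < a) (hs : 0 ≤ s) (hD : 0 < D)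
    (hsD : a * s ≤ D) : s * |2 * (-a / D ^ 2) + D⁻¹ ^ 2| ≤ (2 + a⁻¹) / D := by
  calc s * |2 * (-a / D ^ 2) + D⁻¹ ^ 2| = s * |(1 - 2 * a) / D ^ 2| := by
        congr 2
        field_simp
        ring
    _ = |1 - 2 * a| * (s / D) / D := by
        rw [abs_div, abs_of_pos (pow_pos hD 2)]
        field_simp
    _ ≤ (1 + 2 * a) * a⁻¹ / D := by
        gcongr
        · rw [abs_le]
          constructor <;> linarith
        · exact div_le_inv_of_mul_le ha hD hsD
    _ = (2 + a⁻¹) / D := by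
        field_simp
        ring

lemma fnormE_curvature_inv_affine_le {a b : ℝ} (ha : 0 < a) (hb : 0 < b) (i j : Fin n) (y : En n) :
    fnormE (curvature (radialConn fun s ↦ (a * s + b)⁻¹) i j y) ≤
      3 * √2 * (2 + a⁻¹) / (a * ‖y‖ ^ 2 + b) := by
  set s := ‖y‖ ^ 2
  set D := a * s + b
  have hs : 0 ≤ s := sq_nonneg _
  have hD : 0 < D := by positivity
  have hsD : a * s ≤ D := le_add_of_nonneg_right hb.le
  have hφ : HasDerivAt (fun t ↦ (a * t + b)⁻¹) (-a / D ^ 2) s := by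
    simpa using (((hasDerivAt_id s).const_mul a).add_const b).fun_inv hD.ne'
  calc fnormE (curvature (radialConn fun t ↦ (a * t + b)⁻¹) i j y)
      ≤ √2 * |2 * D⁻¹ - s * D⁻¹ ^ 2| + 2 * √2 * (s * |2 * (-a / D ^ 2) + D⁻¹ ^ 2|) := by
        rw [← mul_assoc _ s]
        exact fnormE_curvature_radialConn_le hφ i j
    _ ≤ √2 * ((2 + a⁻¹) / D) + 2 * √2 * ((2 + a⁻¹) / D) := by
        gcongr
        · exact abs_two_mul_inv_sub_le ha hs hD hsD
        · exact mul_abs_two_mul_neg_div_sq_add_le ha hs hD hsD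
    _ = 3 * √2 * (2 + a⁻¹) / D := by ring

theorem curvature_decay_general {a b : ℝ} (ha : 0 < a) (hb : 0 < b) (i j : Fin n) (y : En n) :
    fnormE (curvature (radialConn fun s ↦ (a * s + b)⁻¹) i j y) ≤
      3 * √2 * (2 + a⁻¹) / min a b / (1 + ‖y‖ ^ 2) := by
  have hmin : min a b * (1 + ‖y‖ ^ 2) ≤ a * ‖y‖ ^ 2 + b := by
    nlinarith [min_le_left a b, min_le_right a b, sq_nonneg ‖y‖]
  grw [fnormE_curvature_inv_affine_le ha hb i j y, div_div, ← hmin]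

end

lemma aC_pos {n : ℕ} (hn : 2 < n) : 0 < aC n := by
  have hsub : (0 : ℝ) < n - 2 := sub_pos.2 (mod_cast hn)
  unfold aC
  positivity

lemma bC_pos {n : ℕ} (hn : 4 < n) (hn' : n < 10) : 0 < bC n := by
  have h4 : (4 : ℝ) < n := mod_cast hn
  have h10 : (n : ℝ) < 10 := mod_cast hn'
  have hsqrt : √(2 * (n : ℝ) - 4) < 6 * (n - 2) / (n + 2) := by
    rw [Real.sqrt_lt' (by apply div_pos <;> linarith), div_pow, lt_div_iff₀ (by positivity)]
    have hfactor : 0 < ((n : ℝ) - 2) * ((n - 4) * (10 - n)) := by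
      apply mul_pos _ (mul_pos _ _) <;> linarith
    linarith
  rw [lt_div_iff₀ (by positivity)] at hsqrt
  unfold bC
  linarith

/-- There is a constant `C = C(n)` such that the curvature of the Yang–Mills soliton
connection `W` satisfies `‖F_{ij}(y)‖_F ≤ C/(1 + |y|²)` for all `y` and all `i, j`. -/
theorem curvature_decay (n : ℕ) (hn : 5 ≤ n) (hn' : n ≤ 9) :
    ∃ C : ℝ, ∀ (y : En n) (i j : Fin n), fnormE (Fc i j y) ≤ C / (1 + ‖y‖ ^ 2) := by
  simp only [Fc_eq_curvature]
  exact ⟨_, fun y i j ↦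
    curvature_decay_general (aC_pos (by lia)) (bC_pos (by lia) (by lia)) i j y⟩
end
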